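/- Let V = V₁ ⊕ ℝe ⊕ V₂ be a real Banach space decomposed as a topological direct sum of closed subspaces with ‖e‖ = 1 (no finite-dimensionality assumption on V₁ or V₂), and let 0 < ρ < R. Set Q = {x ∈ V₁ ⊕ ℝe : ‖x‖ ≤ R} with ∂Q = {x ∈ V₁ ⊕ ℝe : ‖x‖ = R}, and S_ρ = closure(V₂ \ B(0,ρ)) ∪ ((ℝ⁺e ⊕ V₂) ∩ ∂B(0,ρ)). Then S_ρ ∩ ∂Q = ∅, and for every map γ : V → V that is compact (continuous, mapping bounded sets into relatively compact sets), maps closed sets to closed sets, and satisfies γ(x) = x for all x ∈ ∂Q, one has γ(Q) ∩ S_ρ ≠ ∅. -/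

import Mathlib

open Set Filter

/-!
A compact `γ` that fixes the sphere `∂Q` of `W = V₁ ⊕ ℝe` makes this sphere totally bounded, so
`W` is finite-dimensional by Riesz's lemma and the projection `P : V → W` along `V₂` is continuous.
The map `Φ y = P y - max(0, ‖P y‖ - R / (R - ρ) (‖y‖ - ρ)) e` is the identity on `∂Q` and vanishes
only on `S_ρ`. Hence `Φ ∘ γ` maps the ball `Q` of `W` to `W` and is the identity on `∂Q`; such a map
hits every point of the ball, in particular `0`.

This last fact reduces to the nonexistence of a `C¹` retraction `r` of a Euclidean ball onto its
boundary. For small `t` the map `x ↦ x + t (r x - x)` is a diffeomorphism of the open ball, so the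
integral of its Jacobian is the volume of the ball. That integral is a polynomial in `t`, hence it
is the volume at `t = 1` as well, where the Jacobian vanishes because `‖r‖` is constant (Milnor,
Rogers).
-/

open Metric MeasureTheory Polynomial
open scoped NNReal Topology

theorem exists_polynomial_eval_eq_det_one_add_smul {R M : Type*} [CommRing R] [Nontrivial R]
    [AddCommGroup M] [Module R M] [Module.Free R M] [Module.Finite R M] (A : M →ₗ[R] M) :
    ∃ p : R[X], p.natDegree ≤ Module.finrank R M ∧ ∀ t, p.eval t = LinearMap.det (1 + t • A) := by
  let b := Module.finBasis R M
  let N := LinearMap.toMatrix b b A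
  refine ⟨((X : R[X]) • N.map C + (1 : Matrix _ _ R).map C).det, ?_, fun t => ?_⟩
  · simpa only [Fintype.card_fin] using natDegree_det_X_add_C_le N 1
  · rw [← LinearMap.det_toMatrix b, ← coe_evalRingHom, RingHom.map_det]
    congr 1
    ext i j
    by_cases hij : i = j <;> simp [N, LinearMap.toMatrix_one, hij] <;> ring

theorem exists_polynomial_eval_eq_integral {α 𝕜 : Type*} [RCLike 𝕜] {mα : MeasurableSpace α}
    {μ : Measure α} {p : α → 𝕜[X]} {n : ℕ} (hdeg : ∀ x, (p x).natDegree ≤ n)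
    (hint : ∀ t, Integrable (fun x => (p x).eval t) μ) :
    ∃ q : 𝕜[X], ∀ t, q.eval t = ∫ x, (p x).eval t ∂μ := by
  let s := Finset.range (n + 1)
  let v : ℕ → 𝕜 := Nat.cast
  have hv : InjOn v s := Nat.cast_injective.injOn
  have hp (x : α) : p x = Lagrange.interpolate s v fun i => (p x).eval (v i) :=
    Lagrange.eq_interpolate hv <| by
      rw [Finset.card_range]
      exact (degree_le_of_natDegree_le (hdeg x)).trans_lt (by exact_mod_cast n.lt_succ_self)
  refine ⟨Lagrange.interpolate s v fun i => ∫ x, (p x).eval (v i) ∂μ, fun t => ?_⟩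
  calc
    _ = ∑ i ∈ s, (∫ x, (p x).eval (v i) ∂μ) * (Lagrange.basis s v i).eval t := by
      simp only [Lagrange.interpolate_apply, eval_finsetSum, eval_mul, eval_C]
    _ = ∫ x, ∑ i ∈ s, (p x).eval (v i) * (Lagrange.basis s v i).eval t ∂μ := by
      rw [integral_finsetSum _ fun i _ => (hint (v i)).mul_const _]
      simp only [integral_mul_const]
    _ = ∫ x, (p x).eval t ∂μ := by
      congr 1 with x
      conv_rhs => rw [hp x]
      simp only [Lagrange.interpolate_apply, eval_finsetSum, eval_mul, eval_C]

section NormedSpace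

variable {E : Type*} [NormedAddCommGroup E] [NormedSpace ℝ E]

theorem image_ball_eq_of_eqOn_sphere [ProperSpace E] {f : E → E} {c : E} {a : ℝ} (ha : 0 < a)
    (hf : ContinuousOn f (closedBall c a)) (hmaps : MapsTo f (closedBall c a) (closedBall c a))
    (hid : EqOn f id (sphere c a)) (hopen : IsOpen (f '' ball c a)) :
    f '' ball c a = ball c a := by
  have hsub : f '' ball c a ⊆ ball c a := by
    have := hopen.subset_interior_iff.2
      ((image_mono ball_subset_closedBall).trans hmaps.image_subset)
    rwa [interior_closedBall c ha.ne'] at this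
  have hc : f c ∈ f '' ball c a := mem_image_of_mem f (mem_ball_self ha)
  refine hsub.antisymm <| (convex_ball c a).isPreconnected.subset_of_closure_inter_subset hopen
    ⟨f c, hsub hc, hc⟩ ?_
  rintro y ⟨hy_closure, hy⟩
  obtain ⟨x, hx, rfl⟩ := closure_minimal (image_mono ball_subset_closedBall)
    ((isCompact_closedBall c a).image_of_continuousOn hf).isClosed hy_closure
  rcases (mem_closedBall.1 hx).lt_or_eq with hlt | heq
  · exact mem_image_of_mem f hlt
  · rw [hid heq, id] at hy
    exact absurd heq (mem_ball.1 hy).ne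

variable [FiniteDimensional ℝ E]

theorem det_one_add_pos_of_norm_lt_one {A : E →L[ℝ] E} (hA : ‖A‖ < 1) :
    0 < (1 + A : E →L[ℝ] E).det := by
  have : CompleteSpace E := FiniteDimensional.complete ℝ E
  have hcont : ContinuousOn (fun B : E →L[ℝ] E => (1 + B).det) (ball 0 1) :=
    (ContinuousLinearMap.continuous_det.comp (continuous_const.add continuous_id)).continuousOn
  by_contra! hdet
  obtain ⟨B, hB, hB_det⟩ := (convex_ball 0 1).isPreconnected.intermediate_value
    (mem_ball_zero_iff.2 hA) (mem_ball_self one_pos) hcont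
    (show (0 : ℝ) ∈ _ from ⟨hdet, by simp [ContinuousLinearMap.det]⟩)
  have hunit : IsUnit (1 + B) := by
    simpa using isUnit_one_sub_of_norm_lt_one (x := -B) (by simpa using hB)
  exact ((hunit.map ContinuousLinearMap.toLinearMapRingHom).map LinearMap.det).ne_zero hB_det

variable [MeasurableSpace E] [BorelSpace E] (μ : Measure E) [μ.IsAddHaarMeasure]

theorem setIntegral_det_ball_eq_of_norm_sub_one_le {f : E → E} {f' : E → E →L[ℝ] E} {c : E}
    {a K : ℝ} (ha : 0 < a)
    (hf : ∀ x ∈ closedBall c a, HasFDerivWithinAt f (f' x) (closedBall c a) x)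
    (hf' : ∀ x ∈ closedBall c a, ‖f' x - 1‖ ≤ K) (hK : K < 1)
    (hmaps : MapsTo f (closedBall c a) (closedBall c a)) (hid : EqOn f id (sphere c a)) :
    ∫ x in ball c a, (f' x).det ∂μ = μ.real (ball c a) := by
  have : CompleteSpace E := FiniteDimensional.complete ℝ E
  lift K to ℝ≥0 using (norm_nonneg _).trans (hf' c (mem_closedBall_self ha.le))
  have happrox : ApproximatesLinearOn f (ContinuousLinearEquiv.refl ℝ E : E →L[ℝ] E)
      (ball c a) K := fun x hx y hy =>
    (convex_closedBall c a).norm_image_sub_le_of_norm_hasFDerivWithin_le' hf hf'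
      (ball_subset_closedBall hy) (ball_subset_closedBall hx)
  have hK' : Subsingleton E ∨
      K < ‖((ContinuousLinearEquiv.refl ℝ E).symm : E →L[ℝ] E)‖₊⁻¹ :=
    (subsingleton_or_nontrivial E).imp_right fun _ : Nontrivial E => by simpa using hK
  have hopen : IsOpen (f '' ball c a) :=
    happrox.open_image (ContinuousLinearEquiv.refl ℝ E).toNonlinearRightInverse isOpen_ball hK'
  have himage : f '' ball c a = ball c a := image_ball_eq_of_eqOn_sphere ha
    (fun x hx => (hf x hx).continuousWithinAt) hmaps hid hopen
  have hdet (x : E) (hx : x ∈ ball c a) : 0 < (f' x).det := by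
    simpa using det_one_add_pos_of_norm_lt_one
      ((hf' x (ball_subset_closedBall hx)).trans_lt hK)
  calc
    ∫ x in ball c a, (f' x).det ∂μ = ∫ x in ball c a, |(f' x).det| • (1 : ℝ) ∂μ :=
      setIntegral_congr_fun measurableSet_ball fun x hx => by
        simp [abs_of_pos (hdet x hx)]
    _ = ∫ _ in f '' ball c a, (1 : ℝ) ∂μ :=
      (integral_image_eq_integral_abs_det_fderiv_smul μ measurableSet_ball
        (fun x hx => (hf x (ball_subset_closedBall hx)).mono ball_subset_closedBall)
        (happrox.injOn hK') fun _ => (1 : ℝ)).symm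
    _ = μ.real (ball c a) := by
      rw [himage, setIntegral_const, smul_eq_mul, mul_one]

theorem setIntegral_det_fderiv_ball_eq_of_eqOn_sphere {r : E → E} {c : E} {a : ℝ} (ha : 0 < a)
    (hr : ContDiff ℝ 1 r) (hmaps : MapsTo r (closedBall c a) (closedBall c a))
    (hid : EqOn r id (sphere c a)) :
    ∫ x in ball c a, (fderiv ℝ r x).det ∂μ = μ.real (ball c a) := by
  let A : E → E →L[ℝ] E := fun x => fderiv ℝ r x - 1
  have hA : Continuous A := (hr.continuous_fderiv one_ne_zero).sub continuous_const
  obtain ⟨M, hM⟩ := (isCompact_closedBall c a).exists_bound_of_continuousOn hA.continuousOn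
  have hM₀ : 0 ≤ M := (norm_nonneg _).trans (hM c (mem_closedBall_self ha.le))
  choose p hp_deg hp using fun x => exists_polynomial_eval_eq_det_one_add_smul (A x : E →ₗ[ℝ] E)
  have hp' (x : E) (t : ℝ) : (p x).eval t = (1 + t • A x : E →L[ℝ] E).det := hp x t
  have hint (t : ℝ) : IntegrableOn (fun x => (p x).eval t) (ball c a) μ := by
    simp only [hp']
    exact ((ContinuousLinearMap.continuous_det.comp (by fun_prop)).continuousOn.integrableOn_compact
      (isCompact_closedBall c a)).mono_set ball_subset_closedBall
  obtain ⟨q, hq⟩ := exists_polynomial_eval_eq_integral hp_deg hint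
  have hsmall (t : ℝ) (ht : t ∈ Ioo 0 (1 / (M + 1))) : q.eval t = μ.real (ball c a) := by
    have htM : t * (M + 1) < 1 := (lt_div_iff₀ (by positivity)).1 ht.2
    have ht₁ : t ≤ 1 := by nlinarith [ht.1]
    simp only [hq, hp']
    refine setIntegral_det_ball_eq_of_norm_sub_one_le μ (f := fun x => x + t • (r x - x))
      (K := t * M) ha (fun x _ => ?_) (fun x hx => ?_) (by linarith [ht.1]) (fun x hx => ?_)
      fun x hx => ?_
    · have hrx := (hr.differentiable one_ne_zero x).hasFDerivAt
      exact ((hasFDerivAt_id x).add ((hrx.sub (hasFDerivAt_id x)).const_smul t)).hasFDerivWithinAt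
    · rw [add_sub_cancel_left, norm_smul, Real.norm_of_nonneg ht.1.le]
      exact mul_le_mul_of_nonneg_left (hM x hx) ht.1.le
    · exact (convex_closedBall c a).add_smul_sub_mem hx (hmaps hx) ⟨ht.1.le, ht₁⟩
    · simp [hid hx]
  have hq_const : q = C (μ.real (ball c a)) :=
    eq_of_infinite_eval_eq _ _ <|
      (Ioo_infinite (show 0 < 1 / (M + 1) by positivity)).mono fun t ht => by
        simpa using hsmall t ht
  calc
    ∫ x in ball c a, (fderiv ℝ r x).det ∂μ = q.eval 1 := by simp [hq, hp', A]
    _ = μ.real (ball c a) := by rw [hq_const, eval_C]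

end NormedSpace

section InnerProductSpace

variable {E : Type*} [NormedAddCommGroup E] [InnerProductSpace ℝ E] [FiniteDimensional ℝ E]

theorem det_eq_zero_of_norm_eventuallyEq_const {r : E → E} {r' : E →L[ℝ] E} {x : E} {a : ℝ}
    (hr : HasFDerivAt r r' x) (ha : a ≠ 0) (hnorm : ∀ᶠ y in 𝓝 x, ‖r y‖ = a) : r'.det = 0 := by
  by_contra hdet
  obtain ⟨w, hw : r' w = r x⟩ := (Module.End.isUnit_iff _).1
    ((LinearMap.isUnit_iff_isUnit_det (r' : E →ₗ[ℝ] E)).2 (Ne.isUnit hdet)) |>.2 (r x)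
  have hinner : (fun y => inner ℝ (r y) (r y)) =ᶠ[𝓝 x] fun _ => a ^ 2 := hnorm.mono fun y hy => by
    simp only [real_inner_self_eq_norm_sq, hy]
  have hderiv := (hr.inner ℝ hr).unique ((hasFDerivAt_const (a ^ 2) x).congr_of_eventuallyEq hinner)
  have hzero : ‖r x‖ ^ 2 + ‖r x‖ ^ 2 = 0 := by
    simpa [hw] using DFunLike.congr_fun hderiv w
  rw [hnorm.self_of_nhds] at hzero
  exact ha (pow_eq_zero_iff two_ne_zero |>.1 (by linarith))

theorem exists_norm_ne_of_contDiff_of_eqOn_sphere {r : E → E} {a : ℝ} (ha : 0 < a)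
    (hr : ContDiff ℝ 1 r) (hid : EqOn r id (sphere 0 a)) :
    ∃ x ∈ closedBall (0 : E) a, ‖r x‖ ≠ a := by
  by_contra! hnorm
  borelize E
  let μ : Measure E := Measure.addHaar
  have hdet (x : E) (hx : x ∈ ball 0 a) : (fderiv ℝ r x).det = 0 :=
    det_eq_zero_of_norm_eventuallyEq_const (hr.differentiable one_ne_zero x).hasFDerivAt ha.ne' <|
      (isOpen_ball.eventually_mem hx).mono fun y hy => hnorm y (ball_subset_closedBall hy)
  have hvol : 0 = μ.real (ball (0 : E) a) := by
    rw [← setIntegral_det_fderiv_ball_eq_of_eqOn_sphere μ ha hr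
      (fun x hx => mem_closedBall_zero_iff.2 (hnorm x hx).le) hid]
    exact (setIntegral_eq_zero_of_forall_eq_zero hdet).symm
  exact (ENNReal.toReal_pos (measure_ball_pos μ 0 ha).ne' measure_ball_lt_top.ne).ne hvol

theorem exists_eq_zero_of_isBounded_ne_self {f : E → E} (hf : Continuous f)
    (hbdd : Bornology.IsBounded {x | f x ≠ x}) : ∃ x, f x = 0 := by
  by_contra! hf₀
  obtain ⟨a, ha, hsub⟩ := hbdd.subset_ball_lt 0 0
  have hfid {x : E} (hx : a ≤ ‖x‖) : f x = x := by
    by_contra hne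
    exact (mem_ball_zero_iff.1 (hsub hne)).not_ge hx
  obtain ⟨g, hg, hgf, hg_eq, -⟩ := hf.exists_contDiff_approx_and_eqOn 1 hf.norm
    (fun x => norm_pos_iff.2 (hf₀ x)) (S := {x | a + 1 ≤ ‖x‖}) (U := {x | a < ‖x‖})
    (isClosed_le continuous_const continuous_norm)
    ((isOpen_lt continuous_const continuous_norm).mem_nhdsSet.2 fun x (hx : a + 1 ≤ ‖x‖) =>
      (lt_add_one a).trans_le hx)
    (contDiffOn_id.congr fun x hx => hfid (le_of_lt hx))
  have hg₀ (x : E) : g x ≠ 0 := fun h => by simpa [h] using hgf x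
  have hnorm (x : E) : ‖((a + 1) / ‖g x‖) • g x‖ = a + 1 := by
    rw [norm_smul, norm_div, norm_norm, div_mul_cancel₀ _ (norm_ne_zero_iff.2 (hg₀ x)),
      Real.norm_of_nonneg (by positivity)]
  have hid : EqOn (fun x => ((a + 1) / ‖g x‖) • g x) id (sphere 0 (a + 1)) := fun x hx => by
    have hx : ‖x‖ = a + 1 := mem_sphere_zero_iff_norm.1 hx
    have hgx : g x = x := (hg_eq hx.ge).trans (hfid (by linarith))
    simp only [hgx, hx, id]
    rw [div_self (by positivity), one_smul]
  obtain ⟨x, -, hx⟩ := exists_norm_ne_of_contDiff_of_eqOn_sphere (by positivity)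
    ((contDiff_const.div (hg.norm ℝ hg₀) fun x => norm_ne_zero_iff.2 (hg₀ x)).smul hg) hid
  exact hx (hnorm x)

end InnerProductSpace

section NormedSpace

variable {E : Type*} [NormedAddCommGroup E] [NormedSpace ℝ E]

theorem surjective_of_isBounded_ne_self [FiniteDimensional ℝ E] {f : E → E} (hf : Continuous f)
    (hbdd : Bornology.IsBounded {x | f x ≠ x}) : Function.Surjective f := by
  intro y
  let T : E ≃L[ℝ] EuclideanSpace ℝ (Fin (Module.finrank ℝ E)) := toEuclidean
  have hbdd' : Bornology.IsBounded {z | T (f (T.symm z + y) - y) ≠ z} := by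
    refine ((T.lipschitz.comp (LipschitzWith.id.sub (.const y))).isBounded_image hbdd).subset ?_
    exact fun z hz => ⟨T.symm z + y, fun h => hz (by simp [h]), by simp⟩
  obtain ⟨z, hz⟩ := exists_eq_zero_of_isBounded_ne_self (by fun_prop) hbdd'
  exact ⟨T.symm z + y, sub_eq_zero.1 (T.map_eq_zero_iff.1 hz)⟩

theorem closedBall_subset_image_of_eqOn_sphere [FiniteDimensional ℝ E] {f : E → E} {c : E} {a : ℝ}
    (ha : a ≠ 0) (hf : ContinuousOn f (closedBall c a)) (hid : EqOn f id (sphere c a)) :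
    closedBall c a ⊆ f '' closedBall c a := by
  classical
  let F : E → E := (closedBall c a).piecewise f id
  have hF : Continuous F := continuous_piecewise
    (fun x hx => hid (by rwa [frontier_closedBall c ha] at hx))
    (by rwa [isClosed_closedBall.closure_eq]) continuousOn_id
  intro y hy
  obtain ⟨x, rfl⟩ := surjective_of_isBounded_ne_self hF
    (isBounded_closedBall.subset fun x hx => by_contra fun h =>
      hx (piecewise_eq_of_notMem _ _ _ h)) y
  by_cases hx : x ∈ closedBall c a
  · exact ⟨x, hx, (piecewise_eq_of_mem _ _ _ hx).symm⟩
  · have hFx : F x = x := piecewise_eq_of_notMem _ _ _ hx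
    exact absurd (hFx ▸ hy) hx

theorem finiteDimensional_of_totallyBounded_sphere {𝕜 E : Type*} [RCLike 𝕜] [NormedAddCommGroup E]
    [NormedSpace 𝕜 E] {a : ℝ} (ha : 0 < a) (hs : TotallyBounded (sphere (0 : E) a)) :
    FiniteDimensional 𝕜 E := by
  obtain ⟨t, ht, hcover⟩ := Metric.totallyBounded_iff.1 hs (a / 2) (half_pos ha)
  have : FiniteDimensional 𝕜 (Submodule.span 𝕜 t) := .span_of_finite 𝕜 ht
  suffices Submodule.span 𝕜 t = ⊤ from Module.finite_def.2 (this ▸ Submodule.fg_span ht)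
  by_contra hspan
  obtain ⟨x, -, hx, hdist⟩ := riesz_lemma_of_lt_one
    (Submodule.span 𝕜 t).closed_of_finiteDimensional
    (by simpa [Submodule.eq_top_iff'] using hspan) (show (1 / 2 : ℝ) < 1 by norm_num)
  have hax : (a : 𝕜) • x ∈ sphere (0 : E) a := by
    simp [norm_smul, hx, ha.le]
  obtain ⟨y, hy, hxy⟩ := mem_iUnion₂.1 (hcover hax)
  have ha' : (a : 𝕜) ≠ 0 := by exact_mod_cast ha.ne'
  refine (mem_ball_iff_norm.1 hxy).not_ge ?_
  calc
    a / 2 = a * (1 / 2) := by ring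
    _ ≤ a * ‖x - (a : 𝕜)⁻¹ • y‖ :=
      mul_le_mul_of_nonneg_left
        (hdist _ (Submodule.smul_mem _ _ (Submodule.subset_span hy))) ha.le
    _ = ‖(a : 𝕜) • x - y‖ := by
      rw [← smul_inv_smul₀ ha' y, ← smul_sub, norm_smul, RCLike.norm_ofReal, abs_of_pos ha,
        inv_smul_smul₀ ha']

end NormedSpace

theorem isCompl_sup_of_isInternal {R M : Type*} [Ring R] [AddCommGroup M] [Module R M]
    {A B C : Submodule R M} (h : DirectSum.IsInternal ![A, B, C]) : IsCompl (A ⊔ B) C := by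
  constructor
  · simpa [iSup_fin_three] using (h.submodule_iSupIndep 2).symm
  · simpa [codisjoint_iff, iSup_fin_three] using h.submodule_iSup_eq_top

section Linking

variable {V : Type*} [NormedAddCommGroup V] [NormedSpace ℝ V]

/-- The linking set `S_ρ` of Silva's geometry, for `ℝ⁺e ⊕ V₂` written out elementwise. -/
def silvaSet (V₂ : Submodule ℝ V) (e : V) (ρ : ℝ) : Set V :=
  closure ((V₂ : Set V) \ ball 0 ρ) ∪
    ({x | ∃ s : ℝ, 0 ≤ s ∧ ∃ v ∈ V₂, x = s • e + v} ∩ sphere 0 ρ)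

theorem silvaSet_inter_sphere_eq_empty {W V₂ : Submodule ℝ V} (hWV₂ : Disjoint W V₂)
    (hV₂ : IsClosed (V₂ : Set V)) (e : V) {ρ R : ℝ} (hR : R ≠ 0) (hρR : ρ ≠ R) :
    silvaSet V₂ e ρ ∩ {x | x ∈ W ∧ ‖x‖ = R} = ∅ := by
  refine eq_empty_of_forall_notMem ?_
  rintro x ⟨hx | ⟨-, hx⟩, hxW, hxR⟩
  · have hxV₂ : x ∈ V₂ := closure_minimal sdiff_subset hV₂ hx
    rw [Submodule.disjoint_def.1 hWV₂ x hxW hxV₂, norm_zero] at hxR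
    exact hR hxR.symm
  · exact hρR ((mem_sphere_zero_iff_norm.1 hx).symm.trans hxR)

/-- A continuous map that detects `S_ρ`: when `P` is a projection onto `W` with kernel `V₂`,
it fixes the sphere of radius `R` of `W` and vanishes only on `S_ρ`. The slope `R / (R - ρ)` makes
the coefficient of `e` vanish on that sphere. -/
noncomputable def silvaDetector {W : Submodule ℝ V} (P : V →L[ℝ] W) (e : W) (ρ R : ℝ) (y : V) : W :=
  P y - max 0 (‖P y‖ - R / (R - ρ) * (‖y‖ - ρ)) • e

variable {W : Submodule ℝ V} {P : V →L[ℝ] W} {e : W} {ρ R : ℝ}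

theorem continuous_silvaDetector : Continuous (silvaDetector P e ρ R) := by
  unfold silvaDetector
  fun_prop

theorem silvaDetector_coe_eq_self_of_norm_eq (hP : ∀ w : W, P w = w) (hρR : ρ < R) {w : W}
    (hw : ‖w‖ = R) : silvaDetector P e ρ R w = w := by
  have hcoeff : ‖w‖ - R / (R - ρ) * (‖w‖ - ρ) = 0 := by
    rw [hw, div_mul_cancel₀ _ (sub_pos.2 hρR).ne', sub_self]
  simp only [silvaDetector, hP, Submodule.norm_coe, hcoeff, max_self, zero_smul, sub_zero]

theorem mem_silvaSet_of_silvaDetector_eq_zero (hP : ∀ w : W, P w = w) (he : ‖e‖ = 1) (hR : 0 < R)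
    (hρR : ρ < R) {y : V} (hy : silvaDetector P e ρ R y = 0) : y ∈ silvaSet P.ker e ρ := by
  have hK : 0 < R / (R - ρ) := div_pos hR (sub_pos.2 hρR)
  set τ := max 0 (‖P y‖ - R / (R - ρ) * (‖y‖ - ρ)) with hτ_def
  have hPy : P y = τ • e := sub_eq_zero.1 hy
  have hτ : 0 ≤ τ := le_max_left _ _
  have hnorm : ‖P y‖ = τ := by rw [hPy, norm_smul, he, mul_one, Real.norm_of_nonneg hτ]
  rw [hnorm] at hτ_def
  rcases hτ.eq_or_lt with hτ₀ | hτ₀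
  · have hyP : P y = 0 := by rw [hPy, ← hτ₀, zero_smul]
    have hle : 0 ≤ R / (R - ρ) * (‖y‖ - ρ) := by
      have := (le_max_right 0 (τ - R / (R - ρ) * (‖y‖ - ρ))).trans_eq hτ_def.symm
      linarith
    have hρy : ρ ≤ ‖y‖ := sub_nonneg.1 (nonneg_of_mul_nonneg_right hle hK)
    exact .inl (subset_closure ⟨hyP, fun h => (mem_ball_zero_iff.1 h).not_ge hρy⟩)
  · have hzero : R / (R - ρ) * (‖y‖ - ρ) = 0 := by
      rcases max_choice 0 (τ - R / (R - ρ) * (‖y‖ - ρ)) with h | h <;> linarith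
    have hyρ : ‖y‖ = ρ := sub_eq_zero.1 ((mul_eq_zero_iff_left hK.ne').1 hzero)
    refine .inr ⟨⟨τ, hτ, y - P y, ?_, ?_⟩, mem_sphere_zero_iff_norm.2 hyρ⟩
    · rw [LinearMap.mem_ker, ContinuousLinearMap.coe_coe, map_sub, hP, sub_self]
    · rw [hPy, Submodule.coe_smul, add_sub_cancel]

theorem image_inter_silvaSet_nonempty [FiniteDimensional ℝ W] (hP : ∀ w : W, P w = w)
    (he : ‖e‖ = 1) (hR : 0 < R) (hρR : ρ < R) {γ : V → V}
    (hγ : ContinuousOn γ {x | x ∈ W ∧ ‖x‖ ≤ R}) (hfix : ∀ x ∈ {x | x ∈ W ∧ ‖x‖ = R}, γ x = x) :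
    (γ '' {x | x ∈ W ∧ ‖x‖ ≤ R} ∩ silvaSet P.ker e ρ).Nonempty := by
  have hmaps : MapsTo ((↑) : W → V) (closedBall 0 R) {x | x ∈ W ∧ ‖x‖ ≤ R} := fun x hx =>
    ⟨x.2, mem_closedBall_zero_iff.1 hx⟩
  have hcont : ContinuousOn (fun x : W => silvaDetector P e ρ R (γ x)) (closedBall 0 R) :=
    continuous_silvaDetector.comp_continuousOn (hγ.comp continuous_subtype_val.continuousOn hmaps)
  have hid : EqOn (fun x : W => silvaDetector P e ρ R (γ x)) id (sphere 0 R) := fun x hx => by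
    have hx : ‖x‖ = R := mem_sphere_zero_iff_norm.1 hx
    simp only [hfix x ⟨x.2, hx⟩, silvaDetector_coe_eq_self_of_norm_eq hP hρR hx, id]
  obtain ⟨x, hx, hzero⟩ :=
    closedBall_subset_image_of_eqOn_sphere hR.ne' hcont hid (mem_closedBall_self hR.le)
  exact ⟨γ x, mem_image_of_mem γ (hmaps hx),
    mem_silvaSet_of_silvaDetector_eq_zero hP he hR hρR hzero⟩

theorem finiteDimensional_of_totallyBounded_image (hR : 0 < R) {γ : V → V}
    (hγ : TotallyBounded (γ '' {x | x ∈ W ∧ ‖x‖ ≤ R}))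
    (hfix : ∀ x ∈ {x | x ∈ W ∧ ‖x‖ = R}, γ x = x) : FiniteDimensional ℝ W := by
  refine finiteDimensional_of_totallyBounded_sphere hR ?_
  refine (totallyBounded_image_iff isUniformEmbedding_subtype_val.isUniformInducing).1 ?_
  refine hγ.subset (image_subset_iff.2 fun x hx => ?_)
  have hx : ‖x‖ = R := mem_sphere_zero_iff_norm.1 hx
  exact ⟨x, ⟨x.2, hx.le⟩, hfix x ⟨x.2, hx⟩⟩

theorem silva_geometry_links_compact_maps_general {W V₂ : Submodule ℝ V} (hWV₂ : IsCompl W V₂)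
    (hV₂ : IsClosed (V₂ : Set V)) {e : V} (heW : e ∈ W) (he : ‖e‖ = 1) {ρ R : ℝ} (hρ : 0 < ρ)
    (hρR : ρ < R) :
    silvaSet V₂ e ρ ∩ {x | x ∈ W ∧ ‖x‖ = R} = ∅ ∧
    ∀ γ : V → V, ContinuousOn γ {x | x ∈ W ∧ ‖x‖ ≤ R} →
      TotallyBounded (γ '' {x | x ∈ W ∧ ‖x‖ ≤ R}) →
      (∀ x ∈ {x | x ∈ W ∧ ‖x‖ = R}, γ x = x) →
      (γ '' {x | x ∈ W ∧ ‖x‖ ≤ R} ∩ silvaSet V₂ e ρ).Nonempty := by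
  have hR : 0 < R := hρ.trans hρR
  refine ⟨silvaSet_inter_sphere_eq_empty hWV₂.disjoint hV₂ e hR.ne' hρR.ne,
    fun γ hγ hbdd hfix => ?_⟩
  have := finiteDimensional_of_totallyBounded_image hR hbdd hfix
  have hcompl : Submodule.IsTopCompl W V₂ :=
    (Submodule.IsCompl.isTopCompl_of_isClosed_of_finiteDimensional hWV₂.symm hV₂).symm
  have hlink := image_inter_silvaSet_nonempty (e := ⟨e, heW⟩)
    (Submodule.projectionOntoL_apply_left hcompl) he hR hρR hγ hfix
  rwa [Submodule.ker_projectionOntoL hcompl] at hlink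

end Linking

/-- **Linking for Silva's geometry with respect to compact, closed maps, without
finite-dimensionality.** Let `V = V₁ ⊕ ℝe ⊕ V₂` be a real Banach space, a
topological direct sum of closed subspaces with `‖e‖ = 1` (no
finite-dimensionality assumption), and `0 < ρ < R`. With
`Q = {x ∈ V₁ ⊕ ℝe : ‖x‖ ≤ R}`, `bQ = {x ∈ V₁ ⊕ ℝe : ‖x‖ = R}` and
`S_ρ = closure (V₂ \ B(0,ρ)) ∪ ((ℝ⁺e ⊕ V₂) ∩ ∂B(0,ρ))`, one has
`S_ρ ∩ bQ = ∅`, and every map `γ : V → V` that is compact (continuous, sending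
bounded sets to relatively compact sets), maps closed sets onto closed sets and
fixes `bQ` pointwise satisfies `γ(Q) ∩ S_ρ ≠ ∅`. -/
theorem silva_geometry_links_compact_maps
    {V : Type*} [NormedAddCommGroup V] [NormedSpace ℝ V] [CompleteSpace V]
    (V₁ V₂ : Submodule ℝ V) (e : V) (he : ‖e‖ = 1)
    (hV₁closed : IsClosed (V₁ : Set V)) (hV₂closed : IsClosed (V₂ : Set V))
    -- `V = V₁ ⊕ ℝe ⊕ V₂` (internal topological direct sum of closed subspaces)
    (hinternal : DirectSum.IsInternal ![V₁, ℝ ∙ e, V₂])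
    (ρ R : ℝ) (hρ : 0 < ρ) (hρR : ρ < R) :
    ((closure ((V₂ : Set V) \ Metric.ball 0 ρ) ∪
        ({ x : V | ∃ s : ℝ, 0 ≤ s ∧ ∃ v ∈ V₂, x = s • e + v } ∩
          Metric.sphere 0 ρ)) ∩
      { x : V | x ∈ V₁ ⊔ (ℝ ∙ e) ∧ ‖x‖ = R } = ∅) ∧
    ∀ γ : V → V, Continuous γ →
      (∀ B : Set V, Bornology.IsBounded B → IsCompact (closure (γ '' B))) →
      (∀ C : Set V, IsClosed C → IsClosed (γ '' C)) →
      (∀ x ∈ { x : V | x ∈ V₁ ⊔ (ℝ ∙ e) ∧ ‖x‖ = R }, γ x = x) →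
      (γ '' { x : V | x ∈ V₁ ⊔ (ℝ ∙ e) ∧ ‖x‖ ≤ R } ∩
        (closure ((V₂ : Set V) \ Metric.ball 0 ρ) ∪
          ({ x : V | ∃ s : ℝ, 0 ≤ s ∧ ∃ v ∈ V₂, x = s • e + v } ∩
            Metric.sphere 0 ρ))).Nonempty := by
  obtain ⟨hdisj, hlink⟩ := silva_geometry_links_compact_maps_general
    (isCompl_sup_of_isInternal hinternal) hV₂closed
    (Submodule.mem_sup_right (Submodule.mem_span_singleton_self e)) he hρ hρR
  exact ⟨hdisj, fun γ hγ hcomp _ hfix => hlink γ hγ.continuousOn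
    ((hcomp _ (isBounded_closedBall.subset fun x hx => mem_closedBall_zero_iff.2 hx.2)
      ).totallyBounded.subset subset_closure) hfix⟩
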